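/- For any positive semidefinite complex m×m matrices P and Q and real exponents p, q with 1 < p, q < ∞ and 1/p + 1/q = 1, one has Tr(P·Q) ≤ (Tr(P^p))^{1/p} · (Tr(Q^q))^{1/q}. -/

import Mathlib

open Matrix
open scoped ComplexOrder

/-!
Diagonalize `P = U diag(a) Uᴴ` and `Q = V diag(b) Vᴴ` and put `W = Uᴴ V`. Then
`Tr (P Q) = ∑ i j, a i * b j * |W i j|²`, and since `W` is unitary the weights `|W i j|²` form a
doubly stochastic matrix. Splitting each weight as `|W i j|^(2/p) * |W i j|^(2/q)`, the scalar
Hölder inequality over pairs `(i, j)` bounds this by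
`(∑ i j, a i ^ p * |W i j|²)^(1/p) * (∑ i j, b j ^ q * |W i j|²)^(1/q)`, and summing the weights
out leaves exactly `(Tr P^p)^(1/p) * (Tr Q^q)^(1/q)`.
-/

/-- Real power `P^r` of a positive semidefinite matrix, defined by applying `t ↦ t ^ r` to the
eigenvalues via the functional calculus for Hermitian matrices. -/
noncomputable def Matrix.PosSemidef.rpow {n : Type*} [Fintype n] [DecidableEq n]
    {P : Matrix n n ℂ} (hP : P.PosSemidef) (r : ℝ) : Matrix n n ℂ :=
  hP.1.cfc (fun t => t ^ r)

/-- The Hölder inequality for a bilinear form with doubly stochastic coefficients. -/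
theorem sum_mul_le_holder_of_doublyStochastic {m : Type*} [Fintype m]
    (a b : m → ℝ) (w : m → m → ℝ) (ha : ∀ i, 0 ≤ a i) (hb : ∀ i, 0 ≤ b i)
    (hw : ∀ i j, 0 ≤ w i j) (hrow : ∀ i, ∑ j, w i j = 1) (hcol : ∀ j, ∑ i, w i j = 1)
    {p q : ℝ} (hpq : p.HolderConjugate q) :
    ∑ i, ∑ j, a i * b j * w i j ≤ (∑ i, a i ^ p) ^ (1 / p) * (∑ j, b j ^ q) ^ (1 / q) := by
  have key := Real.inner_le_Lp_mul_Lq_of_nonneg (Finset.univ : Finset (m × m)) hpq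
    (f := fun x => a x.1 * w x.1 x.2 ^ (1 / p)) (g := fun x => b x.2 * w x.1 x.2 ^ (1 / q))
    (fun x _ => mul_nonneg (ha _) (Real.rpow_nonneg (hw _ _) _))
    (fun x _ => mul_nonneg (hb _) (Real.rpow_nonneg (hw _ _) _))
  have hprod : ∀ i j, a i * w i j ^ (1 / p) * (b j * w i j ^ (1 / q)) = a i * b j * w i j := by
    intro i j
    have h : w i j ^ (1 / p) * w i j ^ (1 / q) = w i j := by
      rw [← Real.rpow_add_of_nonneg (hw i j) (one_div_nonneg.2 hpq.nonneg)
        (one_div_nonneg.2 hpq.symm.nonneg), one_div, one_div, hpq.inv_add_inv_eq_one,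
        Real.rpow_one]
    linear_combination a i * b j * h
  have hpow : ∀ {r : ℝ} (c : m → ℝ), r ≠ 0 → (∀ i, 0 ≤ c i) → ∀ k i j,
      (c k * w i j ^ (1 / r)) ^ r = c k ^ r * w i j := by
    intro r c hr hc k i j
    rw [Real.mul_rpow (hc k) (Real.rpow_nonneg (hw i j) _), ← Real.rpow_mul (hw i j),
      one_div_mul_cancel hr, Real.rpow_one]
  have hf : ∑ i, ∑ j, a i ^ p * w i j = ∑ i, a i ^ p := by
    simp only [← Finset.mul_sum, hrow, mul_one]
  have hg : ∑ i, ∑ j, b j ^ q * w i j = ∑ j, b j ^ q := by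
    rw [Finset.sum_comm]
    simp only [← Finset.mul_sum, hcol, mul_one]
  simpa only [Fintype.sum_prod_type, hprod, hpow a hpq.ne_zero ha, hpow b hpq.symm.ne_zero hb,
    hf, hg] using key

theorem sum_normSq_row_of_unitary {m : Type*} [Fintype m] [DecidableEq m]
    {W : Matrix m m ℂ} (h : W * Wᴴ = 1) (i : m) : ∑ j, Complex.normSq (W i j) = 1 := by
  have := congrFun (congrFun h i) i
  simp only [mul_apply, conjTranspose_apply, one_apply_eq, RCLike.star_def,
    Complex.mul_conj] at this
  exact_mod_cast this

theorem sum_normSq_col_of_unitary {m : Type*} [Fintype m] [DecidableEq m]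
    {W : Matrix m m ℂ} (h : Wᴴ * W = 1) (j : m) : ∑ i, Complex.normSq (W i j) = 1 := by
  have := congrFun (congrFun h j) j
  simp only [mul_apply, conjTranspose_apply, one_apply_eq, RCLike.star_def, mul_comm,
    Complex.mul_conj] at this
  exact_mod_cast this

theorem trace_re_rpow_eq_sum {m : Type*} [Fintype m] [DecidableEq m]
    {P : Matrix m m ℂ} (hP : P.PosSemidef) (r : ℝ) :
    (hP.rpow r).trace.re = ∑ i, hP.1.eigenvalues i ^ r := by
  rw [Matrix.PosSemidef.rpow, Matrix.IsHermitian.cfc, Unitary.conjStarAlgAut_apply,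
    Matrix.trace_mul_cycle, Unitary.coe_star_mul_self, one_mul, Matrix.trace_diagonal,
    Complex.re_sum]
  exact Finset.sum_congr rfl fun i _ => Complex.ofReal_re _

theorem trace_re_mul_eq_sum {m : Type*} [Fintype m] [DecidableEq m]
    {P Q : Matrix m m ℂ} (hP : P.IsHermitian) (hQ : Q.IsHermitian) :
    (P * Q).trace.re = ∑ i, ∑ j, hP.eigenvalues i * hQ.eigenvalues j *
      Complex.normSq ((star (hP.eigenvectorUnitary : Matrix m m ℂ) *
        (hQ.eigenvectorUnitary : Matrix m m ℂ)) i j) := by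
  set U : Matrix m m ℂ := (hP.eigenvectorUnitary).1
  set V : Matrix m m ℂ := (hQ.eigenvectorUnitary).1
  set A : Matrix m m ℂ := diagonal (RCLike.ofReal ∘ hP.eigenvalues) with hA
  set B : Matrix m m ℂ := diagonal (RCLike.ofReal ∘ hQ.eigenvalues) with hB
  have hPs : P = U * A * star U := by
    have h := hP.spectral_theorem
    rwa [Unitary.conjStarAlgAut_apply] at h
  have hQs : Q = V * B * star V := by
    have h := hQ.spectral_theorem
    rwa [Unitary.conjStarAlgAut_apply] at h
  have htr : (P * Q).trace = (A * (star U * V) * (B * (star U * V)ᴴ)).trace := by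
    rw [conjTranspose_mul, ← star_eq_conjTranspose, ← star_eq_conjTranspose, star_star]
    conv_lhs => rw [hPs, hQs, Matrix.mul_assoc U, Matrix.mul_assoc U, Matrix.trace_mul_comm U]
    simp only [Matrix.mul_assoc]
  rw [htr, Matrix.trace, Complex.re_sum]
  refine Finset.sum_congr rfl fun i _ => ?_
  rw [diag_apply, mul_apply, Complex.re_sum]
  refine Finset.sum_congr rfl fun j _ => ?_
  rw [hA, hB, diagonal_mul, diagonal_mul, conjTranspose_apply, RCLike.star_def]
  generalize (star U * V) i j = z
  have : ((RCLike.ofReal ∘ hP.eigenvalues) i : ℂ) * z *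
      ((RCLike.ofReal ∘ hQ.eigenvalues) j * (starRingEnd ℂ) z) =
      ((hP.eigenvalues i * hQ.eigenvalues j * Complex.normSq z : ℝ) : ℂ) := by
    push_cast
    rw [← Complex.mul_conj]
    simp only [Function.comp_apply, Complex.coe_algebraMap]
    ring
  rw [this, Complex.ofReal_re]

/-- **Hölder inequality for positive semidefinite matrices.** For positive semidefinite
complex `m × m` matrices `P`, `Q` and conjugate exponents `1 < p, q < ∞` with `1/p + 1/q = 1`,
`Tr (P Q) ≤ (Tr P^p)^{1/p} * (Tr Q^q)^{1/q}`. -/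
theorem trace_mul_le_holder_of_posSemidef {m : Type*} [Fintype m] [DecidableEq m]
    {P Q : Matrix m m ℂ} (hP : P.PosSemidef) (hQ : Q.PosSemidef)
    (p q : ℝ) (hp : 1 < p) (hq : 1 < q) (hpq : 1 / p + 1 / q = 1) :
    (P * Q).trace.re ≤
      ((hP.rpow p).trace.re) ^ (1 / p) * ((hQ.rpow q).trace.re) ^ (1 / q) := by
  have hconj : p.HolderConjugate q :=
    Real.holderConjugate_iff.2 ⟨hp, by simpa only [one_div] using hpq⟩
  rw [trace_re_rpow_eq_sum, trace_re_rpow_eq_sum, trace_re_mul_eq_sum hP.1 hQ.1]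
  have hW := (star hP.1.eigenvectorUnitary * hQ.1.eigenvectorUnitary).2
  exact sum_mul_le_holder_of_doublyStochastic _ _ _ hP.eigenvalues_nonneg hQ.eigenvalues_nonneg
    (fun _ _ => Complex.normSq_nonneg _)
    (sum_normSq_row_of_unitary (Unitary.mul_star_self_of_mem hW))
    (sum_normSq_col_of_unitary (Unitary.star_mul_self_of_mem hW)) hconj
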